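/- arXiv:2209.08643 — 3 statements merged into one kernel-verified Lean document; each statement's English description precedes it below -/
import Mathlib

section
/- Let C be a groupoid, Φ : C ⥤ C an automorphism covering the bijection φ of objects, and (ι, σ) a bisection of C. Then α_Φ(σ) := Φ ∘ σ ∘ φ⁻¹ (the assignment x ↦ Φ(σ(φ⁻¹(x)))) is a bisection of C whose underlying object bijection is φ ∘ ι ∘ φ⁻¹, and the associated inner automorphisms satisfy I_{α_Φ(σ)} = Φ ∘ I_σ ∘ Φ⁻¹. -/
open CategoryTheory

/-- A bisection of a groupoid `C`: a bijection `ι` of the objects together with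
a morphism `σ x : x ⟶ ι x` for every object `x`. -/
structure GroupoidBisection (C : Type*) [Groupoid C] where
  ι : C ≃ C
  σ : ∀ x : C, x ⟶ ι x

/-- The inner automorphism associated to a bisection: it sends an object `x` to `ι x`
and a morphism `p : x ⟶ y` to `σ(x)⁻¹ ≫ p ≫ σ(y) : ι x ⟶ ι y`. -/
def GroupoidBisection.innerAut {C : Type*} [Groupoid C] (b : GroupoidBisection C) :
    C ⥤ C where
  obj x := b.ι x
  map {x y} p := Groupoid.inv (b.σ x) ≫ p ≫ b.σ y
  map_id x := by simp
  map_comp {x y z} p q := by simp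

/-- The bisection `α_Φ(σ) = Φ ∘ σ ∘ φ⁻¹` obtained by conjugating a bisection by an
automorphism `Φ` covering the bijection `φ` of objects; its underlying object bijection
is `φ ∘ ι ∘ φ⁻¹`. -/
def conjBisection {C : Type*} [Groupoid C] (Φ : C ⥤ C) (φ : C ≃ C)
    (hobj : ∀ x, Φ.obj x = φ x) (b : GroupoidBisection C) : GroupoidBisection C where
  ι := (φ.symm.trans b.ι).trans φ
  σ x := eqToHom (by rw [hobj]; simp) ≫ Φ.map (b.σ (φ.symm x)) ≫ eqToHom (hobj _)

section Conjugation

variable {C : Type*} [Groupoid C] (Φ : C ⥤ C) (φ : C ≃ C) (hobj : ∀ x, Φ.obj x = φ x)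
  (b : GroupoidBisection C)

lemma conjBisection_ι_apply (x : C) :
    (conjBisection Φ φ hobj b).ι x = φ (b.ι (φ.symm x)) :=
  rfl

lemma conjBisection_ι_obj (x : C) :
    (conjBisection Φ φ hobj b).ι (Φ.obj x) = Φ.obj (b.ι x) := by
  rw [conjBisection_ι_apply, hobj, hobj, φ.symm_apply_apply]

lemma conjBisection_σ_apply (x : C) :
    (conjBisection Φ φ hobj b).σ x =
      eqToHom ((hobj _).trans (φ.apply_symm_apply x)).symm ≫ Φ.map (b.σ (φ.symm x)) ≫
        eqToHom ((hobj _).trans (conjBisection_ι_apply Φ φ hobj b x).symm) :=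
  rfl

lemma conjBisection_σ_obj (x : C) :
    (conjBisection Φ φ hobj b).σ (Φ.obj x) =
      Φ.map (b.σ x) ≫ eqToHom (conjBisection_ι_obj Φ φ hobj b x).symm := by
  have symm_obj : φ.symm (Φ.obj x) = x := by rw [hobj, φ.symm_apply_apply]
  have map_σ_naturality := eqToHom_naturality (fun z => Φ.map (b.σ z)) symm_obj.symm
  rw [conjBisection_σ_apply, ← reassoc_of% map_σ_naturality, eqToHom_trans]

lemma inv_conjBisection_σ_comp_map_comp_σ {x y : C} (p : x ⟶ y) :
    Groupoid.inv ((conjBisection Φ φ hobj b).σ (Φ.obj x)) ≫ Φ.map p ≫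
        (conjBisection Φ φ hobj b).σ (Φ.obj y) =
      eqToHom (conjBisection_ι_obj Φ φ hobj b x) ≫
        Φ.map (Groupoid.inv (b.σ x) ≫ p ≫ b.σ y) ≫
          eqToHom (conjBisection_ι_obj Φ φ hobj b y).symm := by
  simp [conjBisection_σ_obj, Groupoid.inv_eq_inv]

theorem comp_innerAut_conjBisection :
    Φ ⋙ (conjBisection Φ φ hobj b).innerAut = b.innerAut ⋙ Φ :=
  CategoryTheory.Functor.ext (conjBisection_ι_obj Φ φ hobj b) fun _ _ p =>
    inv_conjBisection_σ_comp_map_comp_σ Φ φ hobj b p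

theorem innerAut_conjBisection_general (Ψ : C ⥤ C) (hΨ : Ψ ⋙ Φ = 𝟭 C) :
    (∀ x : C, (conjBisection Φ φ hobj b).ι x = φ (b.ι (φ.symm x))) ∧
    (conjBisection Φ φ hobj b).innerAut = Ψ ⋙ b.innerAut ⋙ Φ := by
  refine ⟨conjBisection_ι_apply Φ φ hobj b, ?_⟩
  rw [← comp_innerAut_conjBisection Φ φ hobj b, ← Functor.assoc, hΨ, Functor.id_comp]

end Conjugation

/-- Let `Φ : C ⥤ C` be an automorphism of a groupoid `C` covering the
bijection `φ` of objects, and `(ι, σ)` a bisection of `C`.  Then `α_Φ(σ) := Φ ∘ σ ∘ φ⁻¹`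
is a bisection whose underlying bijection is `φ ∘ ι ∘ φ⁻¹`, and the associated inner
automorphisms satisfy `I_{α_Φ(σ)} = Φ ∘ I_σ ∘ Φ⁻¹`. -/
theorem innerAut_conjBisection {C : Type*} [Groupoid C]
    (Φ Φinv : C ⥤ C) (φ : C ≃ C) (hobj : ∀ x, Φ.obj x = φ x)
    (h₁ : Φ ⋙ Φinv = 𝟭 C) (h₂ : Φinv ⋙ Φ = 𝟭 C)
    (b : GroupoidBisection C) :
    (∀ x : C, (conjBisection Φ φ hobj b).ι x = φ (b.ι (φ.symm x))) ∧
    (conjBisection Φ φ hobj b).innerAut = Φinv ⋙ b.innerAut ⋙ Φ :=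
  innerAut_conjBisection_general Φ φ hobj b Φinv h₂
end

section
/- Let θ be a left 2-action of a 2-group G₁ ⇉ G₀ on a groupoid (in sets) X₁ ⇉ X₀, with H = ker(s_G), ρ = t_G|_H, σ_h(x) = h·u(x) and Σ_g(p) = u_G(g)·p. Then for all h ∈ H, g ∈ G₀, p ∈ X₁ and x ∈ X₀: (1) the inner automorphism of σ_h equals Σ_{ρ(h)}, that is, σ_h(t(p)) * p * i(σ_h(s(p))) = u_G(ρ(h))·p; (2) α_g(h) := u_G(g)·h·u_G(g)⁻¹ lies in H, and Σ_g(σ_h(g⁻¹·x)) = σ_{α_g(h)}(x). -/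
/-- A groupoid in sets: arrows `X₁`, objects `X₀`, source/target/unit/inversion maps and a
(total) composition `comp p q`, subject to the groupoid axioms whenever the composability
condition `s p = t q` holds. -/
structure SetGroupoid (X₁ X₀ : Type*) where
  s : X₁ → X₀
  t : X₁ → X₀
  u : X₀ → X₁
  i : X₁ → X₁
  comp : X₁ → X₁ → X₁
  s_u : ∀ x, s (u x) = x
  t_u : ∀ x, t (u x) = x
  s_comp : ∀ p q, s p = t q → s (comp p q) = s q
  t_comp : ∀ p q, s p = t q → t (comp p q) = t p
  comp_assoc : ∀ p q r, s p = t q → s q = t r → comp (comp p q) r = comp p (comp q r)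
  comp_u : ∀ p, comp p (u (s p)) = p
  u_comp : ∀ p, comp (u (t p)) p = p
  s_i : ∀ p, s (i p) = t p
  t_i : ∀ p, t (i p) = s p
  comp_i : ∀ p, comp p (i p) = u (t p)
  i_comp : ∀ p, comp (i p) p = u (s p)

/-- A 2-group: a groupoid in sets whose arrows and objects are groups, whose structural maps
are group homomorphisms, and which satisfies the interchange law. -/
structure TwoGroup (G₁ G₀ : Type*) [Group G₁] [Group G₀] extends SetGroupoid G₁ G₀ where
  s_mul : ∀ g g', s (g * g') = s g * s g'
  t_mul : ∀ g g', t (g * g') = t g * t g'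
  u_mul : ∀ g g', u (g * g') = u g * u g'
  i_mul : ∀ g g', i (g * g') = i g * i g'
  interchange : ∀ g₁ g₂ g₁' g₂', s g₁ = t g₂ → s g₁' = t g₂' →
    comp g₁ g₂ * comp g₁' g₂' = comp (g₁ * g₁') (g₂ * g₂')

/-- A left 2-action of a 2-group `G₁ ⇉ G₀` on a groupoid `X₁ ⇉ X₀`: left group actions on
arrows and on objects, compatible with all the structural maps and with composition. -/
structure TwoAction {G₁ G₀ X₁ X₀ : Type*} [Group G₁] [Group G₀]
    (G : TwoGroup G₁ G₀) (X : SetGroupoid X₁ X₀) where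
  act₁ : G₁ → X₁ → X₁
  act₀ : G₀ → X₀ → X₀
  one_act₁ : ∀ p, act₁ 1 p = p
  mul_act₁ : ∀ g g' p, act₁ (g * g') p = act₁ g (act₁ g' p)
  one_act₀ : ∀ x, act₀ 1 x = x
  mul_act₀ : ∀ g g' x, act₀ (g * g') x = act₀ g (act₀ g' x)
  s_act : ∀ g p, X.s (act₁ g p) = act₀ (G.s g) (X.s p)
  t_act : ∀ g p, X.t (act₁ g p) = act₀ (G.t g) (X.t p)
  u_act : ∀ g₀ x, X.u (act₀ g₀ x) = act₁ (G.u g₀) (X.u x)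
  i_act : ∀ g p, X.i (act₁ g p) = act₁ (G.i g) (X.i p)
  comp_act : ∀ g h p q, G.s g = G.t h → X.s p = X.t q →
    X.comp (act₁ g p) (act₁ h q) = act₁ (G.comp g h) (X.comp p q)

/-!
Acting on a composite `u (t p) * p = p = p * u (s p)` factor by factor shows that each arrow `h` of
the 2-group acts as a natural transformation `σ_h` from `Σ_{s h}` to `Σ_{t h}`. Since arrows of `X`
are invertible, naturality says that conjugation by `σ_h` carries `Σ_{s h}` to `Σ_{t h}`; on the
kernel of `s` the former is the identity. Equivariance holds because `u` intertwines the actions on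
objects and on arrows.
-/

theorem SetGroupoid.i_u {X₁ X₀ : Type*} (X : SetGroupoid X₁ X₀) (x : X₀) :
    X.i (X.u x) = X.u x := by
  simpa only [X.t_i, X.s_u, X.comp_i, X.t_u] using (X.u_comp (X.i (X.u x))).symm

namespace TwoGroup

variable {G₁ G₀ : Type*} [Group G₁] [Group G₀] (G : TwoGroup G₁ G₀)

theorem u_one : G.u 1 = 1 :=
  map_one (MonoidHom.mk' G.u G.u_mul)

theorem u_inv (g : G₀) : G.u g⁻¹ = (G.u g)⁻¹ :=
  map_inv (MonoidHom.mk' G.u G.u_mul) g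

/-- The conjugation action `α_g(h) = u(g) h u(g)⁻¹` of objects on arrows. It is defined on all of
`G₁`, not only on the kernel of the source map. -/
def conj (g : G₀) (h : G₁) : G₁ :=
  G.u g * h * (G.u g)⁻¹

theorem s_conj (g : G₀) (h : G₁) : G.s (G.conj g h) = g * G.s h * g⁻¹ := by
  rw [conj, ← G.u_inv, G.s_mul, G.s_mul, G.s_u, G.s_u]

end TwoGroup

namespace TwoAction

variable {G₁ G₀ X₁ X₀ : Type*} [Group G₁] [Group G₀]
  {G : TwoGroup G₁ G₀} {X : SetGroupoid X₁ X₀} (θ : TwoAction G X)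

/-- The map `σ_h : x ↦ h · u(x)`, for an arbitrary arrow `h` of the 2-group. It is a bisection in
the strict sense (a section of `s`) when `h` lies in the kernel of the source map. -/
def sigma (h : G₁) (x : X₀) : X₁ :=
  θ.act₁ h (X.u x)

/-- The map `Σ_g : p ↦ u(g) · p`, the action of an object of the 2-group on arrows of the groupoid
through its unit. -/
def unitAct (g : G₀) (p : X₁) : X₁ :=
  θ.act₁ (G.u g) p

theorem unitAct_one (p : X₁) : θ.unitAct 1 p = p := by
  rw [unitAct, G.u_one, θ.one_act₁]

theorem sigma_comp_unitAct (h : G₁) (p : X₁) :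
    X.comp (θ.sigma h (X.t p)) (θ.unitAct (G.s h) p) = θ.act₁ h p := by
  rw [sigma, unitAct, θ.comp_act _ _ _ _ (G.t_u _).symm (X.s_u _), G.comp_u, X.u_comp]

theorem act₁_comp_i_sigma (h : G₁) (p : X₁) :
    X.comp (θ.act₁ h p) (X.i (θ.sigma h (X.s p))) = θ.unitAct (G.t h) p := by
  rw [sigma, unitAct, θ.i_act, X.i_u, θ.comp_act _ _ _ _ (G.t_i h).symm (X.t_u _).symm, G.comp_i,
    X.comp_u]

theorem unitAct_sigma_act₀_inv (g : G₀) (h : G₁) (x : X₀) :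
    θ.unitAct g (θ.sigma h (θ.act₀ g⁻¹ x)) = θ.sigma (G.conj g h) x := by
  simp only [unitAct, sigma, TwoGroup.conj, θ.u_act, G.u_inv, θ.mul_act₁]

end TwoAction

theorem innerAut_sigma_eq_Sigma_rho_general {G₁ G₀ X₁ X₀ : Type*} [Group G₁] [Group G₀]
    (G : TwoGroup G₁ G₀) (X : SetGroupoid X₁ X₀) (θ : TwoAction G X) :
    (∀ (h : G₁) (p : X₁),
      X.comp (X.comp (θ.sigma h (X.t p)) (θ.unitAct (G.s h) p)) (X.i (θ.sigma h (X.s p)))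
        = θ.unitAct (G.t h) p) ∧
    (∀ (g : G₀) (h : G₁) (x : X₀),
      G.s (G.conj g h) = g * G.s h * g⁻¹ ∧
      θ.unitAct g (θ.sigma h (θ.act₀ g⁻¹ x)) = θ.sigma (G.conj g h) x) :=
  ⟨fun h p ↦ by rw [θ.sigma_comp_unitAct, θ.act₁_comp_i_sigma],
    fun g h x ↦ ⟨G.s_conj g h, θ.unitAct_sigma_act₀_inv g h x⟩⟩

/-- Given a left 2-action of a 2-group `G₁ ⇉ G₀` on a groupoid `X₁ ⇉ X₀`,
with `H = ker s_G`, `ρ = t_G|_H`, `σ_h(x) = h·u(x)` and `Σ_g(p) = u_G(g)·p`: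
(1) the inner automorphism of the bisection `σ_h` equals `Σ_{ρ(h)}`, i.e.
`σ_h(t(p)) * p * i(σ_h(s(p))) = u_G(ρ(h))·p`;
(2) `α_g(h) := u_G(g)·h·u_G(g)⁻¹ ∈ H` and `Σ_g ∘ σ_h ∘ (g⁻¹·) = σ_{α_g(h)}`. -/
theorem innerAut_sigma_eq_Sigma_rho {G₁ G₀ X₁ X₀ : Type*} [Group G₁] [Group G₀]
    (G : TwoGroup G₁ G₀) (X : SetGroupoid X₁ X₀) (θ : TwoAction G X) :
    (∀ (h : G₁) (p : X₁), G.s h = 1 →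
      X.comp (X.comp (θ.act₁ h (X.u (X.t p))) p) (X.i (θ.act₁ h (X.u (X.s p))))
        = θ.act₁ (G.u (G.t h)) p) ∧
    (∀ (g : G₀) (h : G₁) (x : X₀), G.s h = 1 →
      G.s (G.u g * h * (G.u g)⁻¹) = 1 ∧
      θ.act₁ (G.u g) (θ.act₁ h (X.u (θ.act₀ g⁻¹ x)))
        = θ.act₁ (G.u g * h * (G.u g)⁻¹) (X.u x)) := by
  obtain ⟨inner, equivariant⟩ := innerAut_sigma_eq_Sigma_rho_general G X θ
  refine ⟨fun h p hh ↦ ?_, fun g h x hh ↦ ?_⟩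
  · have inner_h := inner h p
    rwa [hh, θ.unitAct_one] at inner_h
  · have equivariant_h := equivariant g h x
    rwa [hh, mul_one, mul_inv_cancel] at equivariant_h
end

section
/- Let (𝔤, 𝔥, ∂, L) be a crossed module of real Lie algebras and suppose the semidirect product 𝔥 ⋊ 𝔤 carries a real inner product B such that the adjoint representation acts by skew-adjoint operators, i.e. B([a,b],c) + B(b,[a,c]) = 0 for all a, b, c ∈ 𝔥 ⋊ 𝔤, and such that the orthogonal complement of the ideal 𝔥 × {0} is exactly {0} × 𝔤 (the 'trivial orthogonal' condition). Then L = 0 (that is, L_x y = 0 for all x ∈ 𝔤 and y ∈ 𝔥), the Lie algebra 𝔥 is abelian, and ∂(𝔥) is contained in the center of 𝔤. -/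
/-- A crossed module of real Lie algebras `(𝔤, 𝔥, ∂, L)`: a Lie algebra homomorphism
`∂ = d : 𝔥 → 𝔤` and a Lie algebra homomorphism `L` from `𝔤` to the derivations of `𝔥`,
satisfying the Peiffer identities `∂(L x y) = ⁅x, ∂y⁆` and `L (∂y) y' = ⁅y, y'⁆`. -/
structure CrossedModuleLieAlg (𝔤 𝔥 : Type*) [LieRing 𝔤] [LieAlgebra ℝ 𝔤]
    [LieRing 𝔥] [LieAlgebra ℝ 𝔥] where
  d : 𝔥 →ₗ[ℝ] 𝔤
  L : 𝔤 →ₗ[ℝ] 𝔥 →ₗ[ℝ] 𝔥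
  d_bracket : ∀ y y' : 𝔥, d ⁅y, y'⁆ = ⁅d y, d y'⁆
  L_der : ∀ (x : 𝔤) (y y' : 𝔥), L x ⁅y, y'⁆ = ⁅L x y, y'⁆ + ⁅y, L x y'⁆
  L_bracket : ∀ (x x' : 𝔤) (y : 𝔥), L ⁅x, x'⁆ y = L x (L x' y) - L x' (L x y)
  peiffer₁ : ∀ (x : 𝔤) (y : 𝔥), d (L x y) = ⁅x, d y⁆
  peiffer₂ : ∀ y y' : 𝔥, L (d y) y' = ⁅y, y'⁆

/-- The bracket of the semidirect product `𝔥 ⋊ 𝔤`: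
`[(y,x),(y',x')] = ([y,y'] + L_x y' − L_{x'} y, [x,x'])`. -/
def sdBracket {𝔤 𝔥 : Type*} [LieRing 𝔤] [LieAlgebra ℝ 𝔤] [LieRing 𝔥] [LieAlgebra ℝ 𝔥]
    (cm : CrossedModuleLieAlg 𝔤 𝔥) : 𝔥 × 𝔤 → 𝔥 × 𝔤 → 𝔥 × 𝔤 :=
  fun a b => (⁅a.1, b.1⁆ + cm.L a.2 b.1 - cm.L b.2 a.1, ⁅a.2, b.2⁆)

/-!
The form is invariant and `𝔥 × {0}` is an ideal, so its orthogonal complement `{0} × 𝔤` is stable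
under all `[a, ·]`. Hence `[(y, 0), (0, x)] = (-L_x y, 0)` lies in `{0} × 𝔤`, which forces
`L_x y = 0`. The Peiffer identities turn `L = 0` into `[𝔥, 𝔥] = 0` and `[∂𝔥, 𝔤] = 0`.
-/

theorem mapsTo_orthogonal_of_isSkewAdjoint {R M N : Type*} [CommRing R] [AddCommGroup M]
    [Module R M] [AddCommGroup N] [Module R N] {B : M →ₗ[R] M →ₗ[R] N} {f : M → M} {S : Set M}
    (hf : B.IsSkewAdjoint f) (hS : Set.MapsTo f S S) :
    Set.MapsTo f {z | ∀ s ∈ S, B z s = 0} {z | ∀ s ∈ S, B z s = 0} := by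
  intro z hz s hs
  calc B (f z) s = B z (-f s) := hf z s
    _ = 0 := by rw [map_neg, hz (f s) (hS hs), neg_zero]

namespace CrossedModuleLieAlg

variable {𝔤 𝔥 : Type*} [LieRing 𝔤] [LieAlgebra ℝ 𝔤] [LieRing 𝔥] [LieAlgebra ℝ 𝔥]
  (cm : CrossedModuleLieAlg 𝔤 𝔥)

theorem mapsTo_sdBracket_range_inl (a : 𝔥 × 𝔤) :
    Set.MapsTo (sdBracket cm a) (Set.range fun y : 𝔥 => (y, (0 : 𝔤)))
      (Set.range fun y : 𝔥 => (y, (0 : 𝔤))) := by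
  rintro _ ⟨y, rfl⟩
  exact ⟨⁅a.1, y⁆ + cm.L a.2 y, by simp [sdBracket]⟩

theorem sdBracket_inl_inr (y : 𝔥) (x : 𝔤) : sdBracket cm (y, 0) (0, x) = (-cm.L x y, 0) := by
  simp [sdBracket]

variable {cm} {B : (𝔥 × 𝔤) →ₗ[ℝ] (𝔥 × 𝔤) →ₗ[ℝ] ℝ}

theorem isSkewAdjoint_sdBracket
    (hskew : ∀ a b c : 𝔥 × 𝔤, B (sdBracket cm a b) c + B b (sdBracket cm a c) = 0)
    (a : 𝔥 × 𝔤) : B.IsSkewAdjoint (sdBracket cm a) := by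
  intro b c
  rw [Pi.neg_apply, map_neg]
  exact eq_neg_of_add_eq_zero_left (hskew a b c)

theorem L_apply_eq_zero_of_orthogonal
    (hskew : ∀ a b c : 𝔥 × 𝔤, B (sdBracket cm a b) c + B b (sdBracket cm a c) = 0)
    (horth : ∀ z : 𝔥 × 𝔤, (∀ y : 𝔥, B z (y, 0) = 0) ↔ z.1 = 0) (x : 𝔤) (y : 𝔥) :
    cm.L x y = 0 := by
  have hx : ∀ s ∈ Set.range fun w : 𝔥 => (w, (0 : 𝔤)), B (0, x) s = 0 :=
    Set.forall_mem_range.2 ((horth (0, x)).2 rfl)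
  have hbracket : ∀ w : 𝔥, B (sdBracket cm (y, 0) (0, x)) (w, 0) = 0 :=
    Set.forall_mem_range.1 <| mapsTo_orthogonal_of_isSkewAdjoint
      (isSkewAdjoint_sdBracket hskew (y, 0)) (mapsTo_sdBracket_range_inl cm (y, 0)) hx
  rw [sdBracket_inl_inr] at hbracket
  exact neg_eq_zero.1 ((horth _).1 hbracket)

end CrossedModuleLieAlg

theorem trivial_orthogonal_crossedModule_general
    {𝔤 𝔥 : Type*} [LieRing 𝔤] [LieAlgebra ℝ 𝔤] [LieRing 𝔥] [LieAlgebra ℝ 𝔥]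
    (cm : CrossedModuleLieAlg 𝔤 𝔥)
    (B : (𝔥 × 𝔤) →ₗ[ℝ] (𝔥 × 𝔤) →ₗ[ℝ] ℝ)
    (hskew : ∀ a b c : 𝔥 × 𝔤, B (sdBracket cm a b) c + B b (sdBracket cm a c) = 0)
    (horth : ∀ z : 𝔥 × 𝔤, (∀ y : 𝔥, B z (y, 0) = 0) ↔ z.1 = 0) :
    (∀ (x : 𝔤) (y : 𝔥), cm.L x y = 0) ∧
    (∀ y y' : 𝔥, ⁅y, y'⁆ = 0) ∧
    (∀ (y : 𝔥) (x : 𝔤), ⁅cm.d y, x⁆ = 0) := by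
  have hL : ∀ (x : 𝔤) (y : 𝔥), cm.L x y = 0 :=
    CrossedModuleLieAlg.L_apply_eq_zero_of_orthogonal hskew horth
  refine ⟨hL, fun y y' => ?_, fun y x => ?_⟩
  · rw [← cm.peiffer₂, hL]
  · rw [← lie_skew, ← cm.peiffer₁, hL, map_zero, neg_zero]

/-- Let `(𝔤, 𝔥, ∂, L)` be a crossed module of real Lie algebras whose
semidirect product `𝔥 ⋊ 𝔤` carries an inner product `B` for which the adjoint
representation acts by skew-adjoint operators, and such that the orthogonal complement of
the ideal `𝔥 × {0}` is exactly `{0} × 𝔤`.  Then `L = 0`, `𝔥` is abelian, and `∂(𝔥)` is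
contained in the center of `𝔤`. -/
theorem trivial_orthogonal_crossedModule
    {𝔤 𝔥 : Type*} [LieRing 𝔤] [LieAlgebra ℝ 𝔤] [LieRing 𝔥] [LieAlgebra ℝ 𝔥]
    (cm : CrossedModuleLieAlg 𝔤 𝔥)
    (B : (𝔥 × 𝔤) →ₗ[ℝ] (𝔥 × 𝔤) →ₗ[ℝ] ℝ)
    (hsymm : ∀ a b : 𝔥 × 𝔤, B a b = B b a)
    (hpos : ∀ a : 𝔥 × 𝔤, a ≠ 0 → 0 < B a a)
    (hskew : ∀ a b c : 𝔥 × 𝔤, B (sdBracket cm a b) c + B b (sdBracket cm a c) = 0)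
    (horth : ∀ z : 𝔥 × 𝔤, (∀ y : 𝔥, B z (y, 0) = 0) ↔ z.1 = 0) :
    (∀ (x : 𝔤) (y : 𝔥), cm.L x y = 0) ∧
    (∀ y y' : 𝔥, ⁅y, y'⁆ = 0) ∧
    (∀ (y : 𝔥) (x : 𝔤), ⁅cm.d y, x⁆ = 0) :=
  trivial_orthogonal_crossedModule_general cm B hskew horth
end
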